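/- arXiv:1304.7952 — 5 statements merged into one kernel-verified Lean document; each statement's English description precedes it below -/
import Mathlib

section
/- Let N ≥ 0, let w₀,…,w_N be integers, and let ℂ* act on ℙ^N(ℂ) by η·(x₀:…:x_N) = (η^{w₀}x₀:…:η^{w_N}x_N). Let c₁ < … < c_r be the distinct weight values, C_i = {j : w_j = c_i}, and ℙ^N_i = {(y₀:…:y_N) : ∃ j ∈ C_i with y_j ≠ 0, and y_j = 0 for all j ∈ C₁ ∪ … ∪ C_{i−1}}. For a fixed point x ∈ W_i = {(x₀:…:x_N) : x_j = 0 for all j ∉ C_i}, the attracting set ℙ^N_x = {y ∈ ℙ^N(ℂ) : η·y → x as η → 0} equals the set of points y ∈ ℙ^N_i whose coordinate vector restricted to the indices in C_i is a nonzero scalar multiple of that of x; moreover ℙ^N_x is a closed subset of ℙ^N_i (with its subspace topology). -/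
open scoped LinearAlgebra.Projectivization
open Filter Topology

/-- The quotient topology on `ℙ^N(ℂ)`, as the quotient of `ℂ^{N+1} ∖ {0}`
by nonzero scalar multiplication. -/
noncomputable instance projTopology (N : ℕ) :
    TopologicalSpace (ℙ ℂ (Fin (N + 1) → ℂ)) :=
  inferInstanceAs (TopologicalSpace (Quotient (projectivizationSetoid ℂ (Fin (N + 1) → ℂ))))

/-- The filter of punctured neighbourhoods of `0` in `ℂ`, restricted to `ℂ*`. -/
noncomputable def zeroFilter : Filter ℂˣ := Filter.comap (Units.val) (𝓝[≠] (0 : ℂ))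

/-- The action of `η ∈ ℂ*` on `ℙ^N(ℂ)` given by
`η·(x₀:…:x_N) = (η^{w₀}x₀:…:η^{w_N}x_N)`. -/
noncomputable def wAct {N : ℕ} (w : Fin (N + 1) → ℤ) (η : ℂˣ)
    (x : ℙ ℂ (Fin (N + 1) → ℂ)) : ℙ ℂ (Fin (N + 1) → ℂ) :=
  Projectivization.mk ℂ (fun j => (η : ℂ) ^ (w j) * x.rep j) (by
    intro h
    apply x.rep_nonzero
    funext j
    have h1 : (η : ℂ) ^ (w j) * x.rep j = 0 := congrFun h j
    rcases mul_eq_zero.1 h1 with h2 | h2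
    · exact absurd h2 (zpow_ne_zero _ η.ne_zero)
    · exact h2)

/-- The stratum `ℙ^N_c` attached to a weight value `c`. -/
def Pstratum {N : ℕ} (w : Fin (N + 1) → ℤ) (c : ℤ) : Set (ℙ ℂ (Fin (N + 1) → ℂ)) :=
  {y | (∃ j : Fin (N + 1), w j = c ∧ y.rep j ≠ 0) ∧
    ∀ j : Fin (N + 1), w j < c → y.rep j = 0}

/-!
In the affine chart `x_k ≠ 0` around a point `x` with `x_k ≠ 0`, where `k` has weight `c`, the orbit
of `y` has coordinates `η ^ (w j - c) * (y_j / y_k)`. As `η → 0` such a coordinate tends to `0` if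
`w j > c`, is constant if `w j = c`, and can converge only if it vanishes when `w j < c`. This
reads off the attracting set, and proportionality to `x` is expressed by the closed conditions
`y_i * x_j = y_j * x_i`.
-/

section HomogeneousCoordinates

variable {ι K : Type*} [Field K]

/-- Mathlib has this class only in the opposite order; this order is the one that lets the diagonal
torus `ι → Kˣ` act on `ℙ K (ι → K)`. -/
instance smulCommClass_pi_units : SMulCommClass (ι → Kˣ) K (ι → K) :=
  .symm ..

lemma exists_weight_eq_and_rep_ne_zero {W : Type*} {w : ι → W} {c : W} {p : ℙ K (ι → K)}
    (hsupp : ∀ j, w j ≠ c → p.rep j = 0) : ∃ k, w k = c ∧ p.rep k ≠ 0 := by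
  obtain ⟨k, hk⟩ := Function.ne_iff.mp p.rep_nonzero
  exact ⟨k, of_not_not fun hwk => hk (hsupp k hwk), hk⟩

lemma rep_mk_apply_eq_zero_iff {v : ι → K} (hv : v ≠ 0) (k : ι) :
    (Projectivization.mk K v hv).rep k = 0 ↔ v k = 0 := by
  obtain ⟨a, ha⟩ := Projectivization.exists_smul_eq_mk_rep K v hv
  simp [← ha, Units.smul_def]

lemma rep_mk_div_rep_mk {v : ι → K} (hv : v ≠ 0) (j k : ι) :
    (Projectivization.mk K v hv).rep j / (Projectivization.mk K v hv).rep k = v j / v k := by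
  obtain ⟨a, ha⟩ := Projectivization.exists_smul_eq_mk_rep K v hv
  simp [← ha, Units.smul_def, mul_div_mul_left]

lemma rep_smul_apply_eq_zero_iff (u : ι → Kˣ) (p : ℙ K (ι → K)) (k : ι) :
    (u • p).rep k = 0 ↔ p.rep k = 0 := by
  conv_lhs => rw [← p.mk_rep, Projectivization.smul_mk, rep_mk_apply_eq_zero_iff]
  simp [Units.smul_def]

lemma rep_smul_div_rep_smul (u : ι → Kˣ) (p : ℙ K (ι → K)) (j k : ι) :
    (u • p).rep j / (u • p).rep k = (u j / u k : K) * (p.rep j / p.rep k) := by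
  conv_lhs => rw [← p.mk_rep, Projectivization.smul_mk, rep_mk_div_rep_mk]
  simp only [Pi.smul_apply', Units.smul_def, smul_eq_mul, mul_div_mul_comm]

open Classical in
/-- The inverse of the affine chart `{p | p_k ≠ 0}` of projective space: the coordinate `u k` is
ignored and replaced by `1`, so that no index type for the remaining coordinates is needed. -/
noncomputable def affineEmbedding (k : ι) (u : ι → K) : ℙ K (ι → K) :=
  Projectivization.mk K (Function.update u k 1) fun h => by simpa using congrFun h k

lemma affineEmbedding_rep_div_rep {p : ℙ K (ι → K)} {k : ι} (hk : p.rep k ≠ 0) :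
    affineEmbedding k (fun j => p.rep j / p.rep k) = p := by
  classical
  conv_rhs => rw [← p.mk_rep]
  refine (Projectivization.mk_eq_mk_iff' ..).mpr ⟨(p.rep k)⁻¹, ?_⟩
  rw [Function.eq_update_iff]
  exact ⟨by simp [hk], fun j _ => by simp [div_eq_inv_mul]⟩

lemma exists_ne_zero_mul_eq_iff_cross_mul_eq {s : Set ι} {u v : ι → K}
    (hu : ∃ i ∈ s, u i ≠ 0) (hv : ∃ i ∈ s, v i ≠ 0) :
    (∃ t : K, t ≠ 0 ∧ ∀ i ∈ s, u i = t * v i) ↔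
      ∀ i ∈ s, ∀ j ∈ s, u i * v j = u j * v i := by
  constructor
  · rintro ⟨t, -, h⟩ i hi j hj
    rw [h i hi, h j hj, mul_right_comm]
  · intro h
    obtain ⟨i, hi, hui⟩ := hu
    obtain ⟨k, hk, hvk⟩ := hv
    have huk : u k ≠ 0 := fun huk => mul_ne_zero hui hvk (by rw [h i hi k hk, huk, zero_mul])
    refine ⟨u k / v k, div_ne_zero huk hvk, fun j hj => ?_⟩
    rw [div_mul_eq_mul_div, eq_div_iff hvk, h j hj k hk]

end HomogeneousCoordinates

section QuotientTopology

lemma continuous_subtype_val_apply {ι : Type*} {X : ι → Type*} [∀ i, TopologicalSpace (X i)]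
    {P : (∀ i, X i) → Prop} (i : ι) : Continuous fun v : Subtype P => v.1 i :=
  (continuous_apply i).comp continuous_subtype_val

variable {ι K : Type*} [Field K] [TopologicalSpace K] [TopologicalSpace (ℙ K (ι → K))]

lemma isOpen_rep_ne_zero [T1Space K]
    (hmk : IsQuotientMap (Projectivization.mk' K (V := ι → K))) (k : ι) :
    IsOpen {p : ℙ K (ι → K) | p.rep k ≠ 0} := by
  rw [← hmk.isOpen_preimage]
  simp only [Set.preimage_ofPred_eq, Projectivization.mk'_eq_mk, ne_eq, rep_mk_apply_eq_zero_iff]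
  exact isOpen_compl_singleton.preimage (continuous_subtype_val_apply k)

lemma continuousOn_rep_div_rep [T1Space K] [ContinuousMul K] [ContinuousInv₀ K]
    (hmk : IsQuotientMap (Projectivization.mk' K (V := ι → K))) (j k : ι) :
    ContinuousOn (fun p : ℙ K (ι → K) => p.rep j / p.rep k) {p | p.rep k ≠ 0} := by
  rw [hmk.continuousOn_isOpen_iff (isOpen_rep_ne_zero hmk k)]
  simp only [Function.comp_def, Set.preimage_ofPred_eq, Projectivization.mk'_eq_mk, ne_eq,
    rep_mk_apply_eq_zero_iff, rep_mk_div_rep_mk]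
  exact (continuous_subtype_val_apply j).continuousOn.div
    (continuous_subtype_val_apply k).continuousOn fun _ hv => hv

lemma isClosed_rep_mul_eq_rep_mul [T2Space K] [ContinuousMul K]
    (hmk : IsQuotientMap (Projectivization.mk' K (V := ι → K))) (i j : ι) (a b : K) :
    IsClosed {p : ℙ K (ι → K) | p.rep i * a = p.rep j * b} := by
  have rep_mk_iff (v : {v : ι → K // v ≠ 0}) :
      (Projectivization.mk K v.1 v.2).rep i * a = (Projectivization.mk K v.1 v.2).rep j * b ↔
        v.1 i * a = v.1 j * b := by
    obtain ⟨r, hr⟩ := Projectivization.exists_smul_eq_mk_rep K v.1 v.2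
    simp [← hr, Units.smul_def, mul_assoc]
  rw [← hmk.isClosed_preimage]
  simp only [Set.preimage_ofPred_eq, Projectivization.mk'_eq_mk, rep_mk_iff]
  exact isClosed_eq ((continuous_subtype_val_apply (X := fun _ => K) i).mul_const a)
    ((continuous_subtype_val_apply (X := fun _ => K) j).mul_const b)

lemma continuous_affineEmbedding
    (hmk : IsQuotientMap (Projectivization.mk' K (V := ι → K))) (k : ι) :
    Continuous (affineEmbedding (K := K) k) := by
  classical
  exact hmk.continuous.comp ((continuous_id.update k continuous_const).subtype_mk _)

lemma tendsto_nhds_iff_rep_div_rep [T1Space K] [ContinuousMul K] [ContinuousInv₀ K]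
    (hmk : IsQuotientMap (Projectivization.mk' K (V := ι → K)))
    {α : Type*} {l : Filter α} {f : α → ℙ K (ι → K)} {x : ℙ K (ι → K)} {k : ι}
    (hk : x.rep k ≠ 0) :
    Tendsto f l (𝓝 x) ↔ (∀ᶠ a in l, (f a).rep k ≠ 0) ∧
      ∀ j, Tendsto (fun a => (f a).rep j / (f a).rep k) l (𝓝 (x.rep j / x.rep k)) := by
  have chart_mem_nhds : {p : ℙ K (ι → K) | p.rep k ≠ 0} ∈ 𝓝 x :=
    (isOpen_rep_ne_zero hmk k).mem_nhds hk
  constructor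
  · intro hf
    exact ⟨hf chart_mem_nhds, fun j =>
      ((continuousOn_rep_div_rep hmk j k).continuousAt chart_mem_nhds).tendsto.comp hf⟩
  · rintro ⟨hfk, hf⟩
    have h := ((continuous_affineEmbedding hmk k).tendsto _).comp (tendsto_pi_nhds.mpr hf)
    rw [affineEmbedding_rep_div_rep hk] at h
    exact h.congr' (hfk.mono fun a ha => affineEmbedding_rep_div_rep ha)

end QuotientTopology

section MonomialLimits

variable {K : Type*} [Field K] [TopologicalSpace K]

lemma tendsto_zpow_nhdsNE_zero_of_pos [ContinuousMul K] [ContinuousInv₀ K] {m : ℤ} (hm : 0 < m) :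
    Tendsto (fun η : K => η ^ m) (𝓝[≠] 0) (𝓝 0) := by
  have h := (continuousAt_zpow₀ (0 : K) m (Or.inr hm.le)).tendsto
  rw [zero_zpow m hm.ne'] at h
  exact h.mono_left nhdsWithin_le_nhds

variable [ContinuousMul K] [ContinuousInv₀ K] [T2Space K] [(𝓝[≠] (0 : K)).NeBot]

lemma tendsto_zpow_mul_const_iff_of_pos {m : ℤ} (hm : 0 < m) (a b : K) :
    Tendsto (fun η : K => η ^ m * a) (𝓝[≠] 0) (𝓝 b) ↔ b = 0 := by
  have h : Tendsto (fun η : K => η ^ m * a) (𝓝[≠] 0) (𝓝 0) := by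
    simpa only [zero_mul] using (tendsto_zpow_nhdsNE_zero_of_pos hm).mul_const a
  exact ⟨fun hb => tendsto_nhds_unique hb h, fun hb => hb ▸ h⟩

lemma tendsto_zpow_mul_const_iff_of_neg {m : ℤ} (hm : m < 0) (a b : K) :
    Tendsto (fun η : K => η ^ m * a) (𝓝[≠] 0) (𝓝 b) ↔ a = 0 ∧ b = 0 := by
  constructor
  · intro h
    have cancel : ∀ᶠ η : K in 𝓝[≠] 0, η ^ (-m) * (η ^ m * a) = a := by
      filter_upwards [self_mem_nhdsWithin] with η hη
      rw [← mul_assoc, ← zpow_add₀ hη, neg_add_cancel, zpow_zero, one_mul]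
    have ha : a = 0 := by
      have h₀ := ((tendsto_zpow_nhdsNE_zero_of_pos (neg_pos.mpr hm)).mul h).congr' cancel
      simpa only [zero_mul, tendsto_const_nhds_iff] using h₀
    subst ha
    simpa only [mul_zero, tendsto_const_nhds_iff, true_and, eq_comm] using h
  · rintro ⟨rfl, rfl⟩
    simp only [mul_zero, tendsto_const_nhds]

end MonomialLimits

section WeightAction

variable {ι K : Type*} [Field K]

/-- The one-parameter subgroup `η ↦ (η ^ w j)_j` of the diagonal torus with weights `w`. It acts on
`ℙ K (ι → K)` through the coordinatewise action of `ι → Kˣ`. -/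
def weightSubgroup (w : ι → ℤ) : Kˣ →* (ι → Kˣ) :=
  MonoidHom.pi fun j => zpowGroupHom (w j)

/-- The stratum of points whose smallest weight with a nonzero coordinate is `c`; it specializes to
`Pstratum`. -/
def weightStratum (w : ι → ℤ) (c : ℤ) : Set (ℙ K (ι → K)) :=
  {y | (∃ j, w j = c ∧ y.rep j ≠ 0) ∧ ∀ j, w j < c → y.rep j = 0}

lemma val_weightSubgroup_apply (w : ι → ℤ) (η : Kˣ) (j : ι) :
    (weightSubgroup w η j : K) = (η : K) ^ w j :=
  Units.val_zpow_eq_zpow_val η (w j)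

lemma range_units_val_mem_nhdsNE_zero [TopologicalSpace K] :
    Set.range (Units.val : Kˣ → K) ∈ 𝓝[≠] 0 :=
  mem_of_superset self_mem_nhdsWithin fun η hη => ⟨Units.mk0 η hη, rfl⟩

lemma tendsto_weight_coordinate_iff [TopologicalSpace K] [ContinuousMul K] [ContinuousInv₀ K]
    [T2Space K] [(𝓝[≠] (0 : K)).NeBot] {w : ι → ℤ} {c : ℤ} {x y : ℙ K (ι → K)}
    (hsupp : ∀ j, w j ≠ c → x.rep j = 0) {k : ι} (hyk : y.rep k ≠ 0) (j : ι) :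
    Tendsto (fun η : K => η ^ (w j - c) * (y.rep j / y.rep k))
        (𝓝[≠] 0) (𝓝 (x.rep j / x.rep k)) ↔
      (w j < c → y.rep j = 0) ∧ (w j = c → y.rep j / y.rep k = x.rep j / x.rep k) := by
  rcases lt_trichotomy (w j) c with hj | hj | hj
  · simp [tendsto_zpow_mul_const_iff_of_neg (sub_neg.mpr hj), hsupp j hj.ne, hj, hj.ne, hyk]
  · simp [hj, tendsto_const_nhds_iff]
  · simp [tendsto_zpow_mul_const_iff_of_pos (sub_pos.mpr hj), hsupp j hj.ne', hj.not_gt, hj.ne']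

lemma isClosed_proportional_in_weightStratum [TopologicalSpace K] [T2Space K]
    [ContinuousMul K] [TopologicalSpace (ℙ K (ι → K))]
    (hmk : IsQuotientMap (Projectivization.mk' K (V := ι → K)))
    {w : ι → ℤ} {c : ℤ} {x : ℙ K (ι → K)} (hx : ∃ k, w k = c ∧ x.rep k ≠ 0) :
    IsClosed {y : weightStratum (K := K) w c |
      ∃ t : K, t ≠ 0 ∧ ∀ j, w j = c → y.1.rep j = t * x.rep j} := by
  have proportional_iff (y : weightStratum (K := K) w c) :=
    exists_ne_zero_mul_eq_iff_cross_mul_eq (s := {j | w j = c}) y.2.1 hx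
  simp only [Set.mem_ofPred_eq] at proportional_iff
  simp only [proportional_iff, Set.ofPred_forall]
  exact isClosed_iInter fun i => isClosed_iInter fun _ => isClosed_iInter fun j =>
    isClosed_iInter fun _ =>
      (isClosed_rep_mul_eq_rep_mul hmk i j _ _).preimage continuous_subtype_val

end WeightAction

section AttractingSet

variable {ι K : Type*} [Field K] [TopologicalSpace K] [ContinuousMul K] [ContinuousInv₀ K]
  [(𝓝[≠] (0 : K)).NeBot] [TopologicalSpace (ℙ K (ι → K))]

lemma tendsto_weightSubgroup_smul_iff_chart [T1Space K]
    (hmk : IsQuotientMap (Projectivization.mk' K (V := ι → K)))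
    (w : ι → ℤ) {x : ℙ K (ι → K)} {k : ι} (hk : x.rep k ≠ 0) (y : ℙ K (ι → K)) :
    Tendsto (fun η : Kˣ => weightSubgroup w η • y) (comap Units.val (𝓝[≠] 0)) (𝓝 x) ↔
      y.rep k ≠ 0 ∧ ∀ j, Tendsto (fun η : K => η ^ (w j - w k) * (y.rep j / y.rep k))
        (𝓝[≠] 0) (𝓝 (x.rep j / x.rep k)) := by
  have : (comap (Units.val : Kˣ → K) (𝓝[≠] 0)).NeBot :=
    NeBot.comap_of_range_mem inferInstance range_units_val_mem_nhdsNE_zero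
  rw [tendsto_nhds_iff_rep_div_rep hmk hk]
  simp only [ne_eq, rep_smul_apply_eq_zero_iff, rep_smul_div_rep_smul, eventually_const,
    val_weightSubgroup_apply, ← zpow_sub₀ (Units.ne_zero _),
    ← tendsto_comap'_iff range_units_val_mem_nhdsNE_zero, Function.comp_def]

variable [T2Space K]

theorem tendsto_weightSubgroup_smul_iff
    (hmk : IsQuotientMap (Projectivization.mk' K (V := ι → K)))
    {w : ι → ℤ} {c : ℤ} {x : ℙ K (ι → K)} (hsupp : ∀ j, w j ≠ c → x.rep j = 0)
    (y : ℙ K (ι → K)) :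
    Tendsto (fun η : Kˣ => weightSubgroup w η • y) (comap Units.val (𝓝[≠] 0)) (𝓝 x) ↔
      y ∈ weightStratum w c ∧ ∃ t : K, t ≠ 0 ∧ ∀ j, w j = c → y.rep j = t * x.rep j := by
  obtain ⟨k, hwk, hxk⟩ := exists_weight_eq_and_rep_ne_zero hsupp
  rw [tendsto_weightSubgroup_smul_iff_chart hmk w hxk, hwk]
  constructor
  · rintro ⟨hyk, h⟩
    simp only [tendsto_weight_coordinate_iff hsupp hyk, forall_and] at h
    obtain ⟨hlt, heq⟩ := h
    refine ⟨⟨⟨k, hwk, hyk⟩, hlt⟩, y.rep k / x.rep k, div_ne_zero hyk hxk, fun j hj => ?_⟩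
    rw [div_mul_comm, ← heq j hj, div_mul_cancel₀ _ hyk]
  · rintro ⟨⟨-, hlt⟩, t, ht, heq⟩
    have hyk : y.rep k ≠ 0 := by rw [heq k hwk]; exact mul_ne_zero ht hxk
    refine ⟨hyk, fun j => (tendsto_weight_coordinate_iff hsupp hyk j).mpr ⟨hlt j, fun hj => ?_⟩⟩
    rw [heq j hj, heq k hwk, mul_div_mul_left _ _ ht]

theorem statement3_general
    (hmk : IsQuotientMap (Projectivization.mk' K (V := ι → K)))
    (w : ι → ℤ) (c : ℤ) (x : ℙ K (ι → K)) (hsupp : ∀ j, w j ≠ c → x.rep j = 0) :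
    {y : ℙ K (ι → K) |
        Tendsto (fun η : Kˣ => weightSubgroup w η • y) (comap Units.val (𝓝[≠] 0)) (𝓝 x)} =
      {y | y ∈ weightStratum w c ∧ ∃ t : K, t ≠ 0 ∧ ∀ j, w j = c → y.rep j = t * x.rep j} ∧
    IsClosed {y : weightStratum (K := K) w c |
      Tendsto (fun η : Kˣ => weightSubgroup w η • y.1) (comap Units.val (𝓝[≠] 0)) (𝓝 x)} := by
  simp only [tendsto_weightSubgroup_smul_iff hmk hsupp, Subtype.coe_prop, true_and]
  exact isClosed_proportional_in_weightStratum hmk (exists_weight_eq_and_rep_ne_zero hsupp)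

end AttractingSet

lemma isQuotientMap_mk' (N : ℕ) :
    IsQuotientMap (Projectivization.mk' ℂ (V := Fin (N + 1) → ℂ)) :=
  isQuotientMap_quot_mk

lemma wAct_eq_weightSubgroup_smul {N : ℕ} (w : Fin (N + 1) → ℤ) (η : ℂˣ)
    (x : ℙ ℂ (Fin (N + 1) → ℂ)) : wAct w η x = weightSubgroup w η • x := by
  conv_rhs => rw [← x.mk_rep, Projectivization.smul_mk]
  unfold wAct
  congr 1
  ext j
  simp only [Pi.smul_apply', Units.smul_def, smul_eq_mul, val_weightSubgroup_apply]

/-- For a fixed point `x` supported on the coordinates of weight `c`, the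
attracting set of `x` is the set of points `y` in the stratum `ℙ^N_c` whose
coordinates of weight `c` form a nonzero scalar multiple of those of `x`;
moreover it is closed in `ℙ^N_c` for the subspace topology. -/
theorem statement3 (N : ℕ) (w : Fin (N + 1) → ℤ) (c : ℤ) (hc : c ∈ Set.range w)
    (x : ℙ ℂ (Fin (N + 1) → ℂ))
    (hfix : ∀ η : ℂˣ, wAct w η x = x)
    (hsupp : ∀ j : Fin (N + 1), w j ≠ c → x.rep j = 0) :
    ({y : ℙ ℂ (Fin (N + 1) → ℂ) |
        Filter.Tendsto (fun η : ℂˣ => wAct w η y) zeroFilter (𝓝 x)} =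
      {y : ℙ ℂ (Fin (N + 1) → ℂ) | y ∈ Pstratum w c ∧
        ∃ t : ℂ, t ≠ 0 ∧ ∀ j : Fin (N + 1), w j = c → y.rep j = t * x.rep j}) ∧
    IsClosed {y : ↥(Pstratum w c) |
      Filter.Tendsto (fun η : ℂˣ => wAct w η (y : ℙ ℂ (Fin (N + 1) → ℂ)))
        zeroFilter (𝓝 x)} := by
  simp only [wAct_eq_weightSubgroup_smul]
  exact statement3_general (isQuotientMap_mk' N) w c x hsupp
end

section
/- Let N ≥ 0, let w₀,…,w_N be integers, and let ℂ* act on ℙ^N(ℂ) by η·(x₀:…:x_N) = (η^{w₀}x₀:…:η^{w_N}x_N). Let X ⊆ ℙ^N(ℂ) be a locally closed subset stable under this action, such that X has only finitely many fixed points. For a fixed point x₀ ∈ X, let X_{x₀} = {x ∈ X : η·x → x₀ as η → 0}. Define a relation ≺ on the set of fixed points of X as the reflexive-transitive closure of the relation: x ≺₀ x' if and only if cl(X_x) ∩ X_{x'} ≠ ∅, where cl denotes closure in ℙ^N(ℂ). Then ≺ is antisymmetric, i.e., it is a partial order on the set of fixed points of X. -/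
open scoped LinearAlgebra.Projectivization
open Filter Topology

/-- The set of fixed points of the action lying in `X`. -/
def fixedIn {N : ℕ} (w : Fin (N + 1) → ℤ) (X : Set (ℙ ℂ (Fin (N + 1) → ℂ))) :
    Set (ℙ ℂ (Fin (N + 1) → ℂ)) :=
  {x ∈ X | ∀ η : ℂˣ, wAct w η x = x}

/-- The attracting set in `X` of a point `x₀`. -/
noncomputable def attractIn {N : ℕ} (w : Fin (N + 1) → ℤ)
    (X : Set (ℙ ℂ (Fin (N + 1) → ℂ))) (x₀ : ℙ ℂ (Fin (N + 1) → ℂ)) :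
    Set (ℙ ℂ (Fin (N + 1) → ℂ)) :=
  {x ∈ X | Filter.Tendsto (fun η : ℂˣ => wAct w η x) zeroFilter (𝓝 x₀)}

/-!
Let `n` be the least weight occurring in the coordinates of `a`, and suppose `η · x → a` as `η → 0`.
Comparing ratios of coordinates shows that `a` is homogeneous of weight `n` and that
`x = t a + (coordinates of weight > n)` with `t ≠ 0`. So the attracting set of `a` lies in the
projectivization of `ℂ a ⊕ V_{> n}`, which is closed and hence contains the closure of that set.
If this closure meets the attracting set of `b`, of weight `m`, then a common point has the form
`t a + v = s b + v'` with `s ≠ 0`, `v ∈ V_{> n}`, `v' ∈ V_{> m}`. Its component of weight `m` is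
nonzero, so `n ≤ m`, and if `n = m` then `t a = s b`, that is `a = b`. The least weight therefore
increases strictly along every nontrivial step of the relation, which rules out cycles.
-/

section Relation

variable {α β : Type*} [Preorder β] {r : α → α → Prop} {f : α → β} {a b : α}

theorem eq_or_lt_of_reflTransGen (hr : ∀ a b, r a b → a = b ∨ f a < f b)
    (hab : Relation.ReflTransGen r a b) : a = b ∨ f a < f b := by
  induction hab with
  | refl => exact .inl rfl
  | tail _ hbc ih =>
    rcases ih, hr _ _ hbc with ⟨rfl | hlt, rfl | hlt'⟩
    · exact .inl rfl
    · exact .inr hlt'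
    · exact .inr hlt
    · exact .inr (hlt.trans hlt')

theorem reflTransGen_antisymm_of_eq_or_lt (hr : ∀ a b, r a b → a = b ∨ f a < f b)
    (hab : Relation.ReflTransGen r a b) (hba : Relation.ReflTransGen r b a) : a = b := by
  rcases eq_or_lt_of_reflTransGen hr hab, eq_or_lt_of_reflTransGen hr hba with
    ⟨heq | hlt, heq' | hlt'⟩
  · exact heq
  · exact heq
  · exact heq'.symm
  · exact absurd hlt' hlt.not_gt

end Relation

section ZPowLimits

variable {G₀ : Type*} [GroupWithZero G₀] [TopologicalSpace G₀] [ContinuousMul G₀]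
  [ContinuousInv₀ G₀] {m : ℤ} {c l : G₀}

theorem tendsto_zpow_nhdsNE_zero (hm : 0 < m) :
    Tendsto (fun η : G₀ => η ^ m) (𝓝[≠] 0) (𝓝 0) := by
  have h := (continuousAt_zpow₀ (0 : G₀) m (.inr hm.le)).tendsto
  rw [zero_zpow m hm.ne'] at h
  exact h.mono_left nhdsWithin_le_nhds

variable [T2Space G₀] [(𝓝[≠] (0 : G₀)).NeBot]

theorem limit_eq_zero_of_tendsto_zpow_mul (hm : 0 < m)
    (h : Tendsto (fun η : G₀ => η ^ m * c) (𝓝[≠] 0) (𝓝 l)) : l = 0 :=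
  tendsto_nhds_unique h <| by simpa only [zero_mul] using (tendsto_zpow_nhdsNE_zero hm).mul_const c

theorem coeff_eq_zero_of_tendsto_zpow_mul (hm : m < 0)
    (h : Tendsto (fun η : G₀ => η ^ m * c) (𝓝[≠] 0) (𝓝 l)) : c = 0 := by
  have hprod : Tendsto (fun η : G₀ => η ^ (-m) * (η ^ m * c)) (𝓝[≠] 0) (𝓝 0) := by
    simpa only [zero_mul] using (tendsto_zpow_nhdsNE_zero (neg_pos.2 hm)).mul h
  have hconst : (fun η : G₀ => η ^ (-m) * (η ^ m * c)) =ᶠ[𝓝[≠] 0] fun _ => c := by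
    filter_upwards [self_mem_nhdsWithin] with η hη
    rw [zpow_neg, inv_mul_cancel_left₀ (zpow_ne_zero m hη)]
  exact tendsto_nhds_unique tendsto_const_nhds (hprod.congr' hconst)

end ZPowLimits

theorem rep_mk_mem_iff {K V : Type*} [DivisionRing K] [AddCommGroup V] [Module K V]
    (S : Submodule K V) {v : V} (hv : v ≠ 0) : (Projectivization.mk K v hv).rep ∈ S ↔ v ∈ S := by
  obtain ⟨c, hc⟩ := Projectivization.exists_smul_eq_mk_rep K v hv
  rw [← hc, Submodule.smul_mem_iff']

theorem rep_mk_div {K ι : Type*} [Field K] {v : ι → K} (hv : v ≠ 0) (i k : ι) :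
    (Projectivization.mk K v hv).rep i / (Projectivization.mk K v hv).rep k = v i / v k := by
  obtain ⟨c, hc⟩ := Projectivization.exists_smul_eq_mk_rep K v hv
  rw [← hc]
  exact mul_div_mul_left _ _ c.ne_zero

theorem rep_mk_apply_ne_zero_iff {K ι : Type*} [DivisionRing K] {v : ι → K} (hv : v ≠ 0) (k : ι) :
    (Projectivization.mk K v hv).rep k ≠ 0 ↔ v k ≠ 0 :=
  (rep_mk_mem_iff (LinearMap.ker (LinearMap.proj k : (ι → K) →ₗ[K] K)) hv).not

section Weights

variable {K ι : Type*} [Ring K] (w : ι → ℤ)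

/-- The vectors homogeneous of weight `n`: all their nonzero coordinates have weight `n`. -/
def weightSpace (n : ℤ) : Submodule K (ι → K) := Submodule.pi {i | w i ≠ n} fun _ => ⊥

/-- The vectors all of whose nonzero coordinates have weight greater than `n`, written `V_{> n}`. -/
def weightsAbove (n : ℤ) : Submodule K (ι → K) := Submodule.pi {i | w i ≤ n} fun _ => ⊥

/-- The least weight of a nonzero coordinate of `v` (junk value `0` if `v = 0` or if there is no
least one). -/
noncomputable def leastWeight (v : ι → K) : ℤ := sInf (w '' Function.support v)

/-- The subspace `K a ⊕ V_{> n}`, with `n` the least weight of `a`. For a fixed point `a` its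
projectivization is the closure in projective space of the set of all points attracted to `a`. -/
noncomputable def attractingSubspace (a : ι → K) : Submodule K (ι → K) :=
  K ∙ a ⊔ weightsAbove w (leastWeight w a)

variable {w}

theorem mem_weightSpace {n : ℤ} {v : ι → K} : v ∈ weightSpace w n ↔ ∀ i, w i ≠ n → v i = 0 :=
  Iff.rfl

theorem mem_weightsAbove {n : ℤ} {v : ι → K} : v ∈ weightsAbove w n ↔ ∀ i, w i ≤ n → v i = 0 :=
  Iff.rfl

theorem exists_apply_ne_zero_and_eq_leastWeight [Finite ι] {v : ι → K} (hv : v ≠ 0) :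
    ∃ k, v k ≠ 0 ∧ w k = leastWeight w v :=
  ((Function.support_nonempty_iff.2 hv).image w).csInf_mem (Set.toFinite _)

theorem apply_eq_zero_of_lt_leastWeight [Finite ι] {v : ι → K} {i : ι}
    (hi : w i < leastWeight w v) : v i = 0 := by
  by_contra h
  exact hi.not_ge (csInf_le (Set.toFinite _).bddBelow ⟨i, h, rfl⟩)

theorem mem_attractingSubspace {a x : ι → K} :
    x ∈ attractingSubspace w a ↔ ∃ t : K, x - t • a ∈ weightsAbove w (leastWeight w a) := by
  simp only [attractingSubspace, Submodule.mem_sup, Submodule.mem_span_singleton,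
    exists_exists_eq_and]
  refine exists_congr fun t => ⟨?_, fun h => ⟨_, h, add_sub_cancel _ _⟩⟩
  rintro ⟨v, hv, rfl⟩
  rwa [add_sub_cancel_left]

theorem eq_or_leastWeight_lt_of_mem_attractingSubspace {K : Type*} [DivisionRing K]
    {a b : ℙ K (ι → K)} {y : ι → K} {s : K}
    (ha : a.rep ∈ weightSpace w (leastWeight w a.rep))
    (hb : b.rep ∈ weightSpace w (leastWeight w b.rep))
    (hya : y ∈ attractingSubspace w a.rep) (hs : s ≠ 0)
    (hyb : y - s • b.rep ∈ weightsAbove w (leastWeight w b.rep)) :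
    a = b ∨ leastWeight w a.rep < leastWeight w b.rep := by
  obtain ⟨t, hyt⟩ := mem_attractingSubspace.1 hya
  rw [mem_weightSpace] at ha hb
  rw [mem_weightsAbove] at hyt hyb
  refine or_iff_not_imp_right.2 fun hle => ?_
  rw [not_lt] at hle
  have hcomponent : ∀ i, w i = leastWeight w b.rep → t * a.rep i = s * b.rep i := fun i hi =>
    (sub_eq_zero.1 (hyt i (hi.trans_le hle))).symm.trans (sub_eq_zero.1 (hyb i hi.le))
  obtain ⟨k, hbk⟩ := Function.ne_iff.1 b.rep_nonzero
  have hwk : w k = leastWeight w b.rep := not_imp_comm.1 (hb k) hbk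
  have hta : t * a.rep k ≠ 0 := hcomponent k hwk ▸ mul_ne_zero hs hbk
  have hweight : leastWeight w a.rep = leastWeight w b.rep :=
    (not_imp_comm.1 (ha k) (right_ne_zero_of_mul hta)).symm.trans hwk
  have hsmul : t • a.rep = s • b.rep := by
    funext i
    by_cases hi : w i = leastWeight w b.rep
    · exact hcomponent i hi
    · simp only [Pi.smul_apply, ha i (hweight ▸ hi), hb i hi, smul_zero]
  rw [← a.mk_rep, ← b.mk_rep, Projectivization.mk_eq_mk_iff']
  refine ⟨t⁻¹ * s, ?_⟩
  rw [mul_smul, ← hsmul, inv_smul_smul₀ (left_ne_zero_of_mul hta)]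

end Weights

section Topology

variable {N : ℕ}

theorem isQuotientMap_projectivization_mk' :
    IsQuotientMap (Projectivization.mk' ℂ : {v : Fin (N + 1) → ℂ // v ≠ 0} → _) :=
  isQuotientMap_quotient_mk'

theorem continuous_subtype_apply (i : Fin (N + 1)) :
    Continuous fun v : {v : Fin (N + 1) → ℂ // v ≠ 0} => v.1 i :=
  (continuous_apply i).comp continuous_subtype_val

theorem isClosed_setOf_rep_mem (S : Submodule ℂ (Fin (N + 1) → ℂ)) :
    IsClosed {x : ℙ ℂ (Fin (N + 1) → ℂ) | x.rep ∈ S} := by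
  rw [← isQuotientMap_projectivization_mk'.isClosed_preimage]
  simp only [Set.preimage_ofPred_eq, Projectivization.mk'_eq_mk, rep_mk_mem_iff]
  exact S.closed_of_finiteDimensional.preimage continuous_subtype_val

theorem isOpen_setOf_rep_apply_ne_zero (k : Fin (N + 1)) :
    IsOpen {x : ℙ ℂ (Fin (N + 1) → ℂ) | x.rep k ≠ 0} :=
  (isClosed_setOf_rep_mem (LinearMap.ker (LinearMap.proj k))).isOpen_compl

theorem continuousOn_rep_div (i k : Fin (N + 1)) :
    ContinuousOn (fun x : ℙ ℂ (Fin (N + 1) → ℂ) => x.rep i / x.rep k) {x | x.rep k ≠ 0} := by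
  rw [isQuotientMap_projectivization_mk'.continuousOn_isOpen_iff
    (isOpen_setOf_rep_apply_ne_zero k)]
  simp only [Function.comp_def, Set.preimage_ofPred_eq, Projectivization.mk'_eq_mk, rep_mk_div,
    rep_mk_apply_ne_zero_iff]
  exact (continuous_subtype_apply i).continuousOn.div (continuous_subtype_apply k).continuousOn
    fun _ hv => hv

end Topology

section Attraction

variable {N : ℕ} {w : Fin (N + 1) → ℤ} {X : Set (ℙ ℂ (Fin (N + 1) → ℂ))}
  {x a b : ℙ ℂ (Fin (N + 1) → ℂ)}

theorem rep_wAct_div (w : Fin (N + 1) → ℤ) (η : ℂˣ) (x : ℙ ℂ (Fin (N + 1) → ℂ))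
    (i k : Fin (N + 1)) :
    (wAct w η x).rep i / (wAct w η x).rep k =
      (η : ℂ) ^ (w i - w k) * (x.rep i / x.rep k) := by
  rw [wAct, rep_mk_div, mul_div_mul_comm, zpow_sub₀ η.ne_zero]

theorem tendsto_zeroFilter_iff {β : Type*} {f : ℂ → β} {l : Filter β} :
    Tendsto (fun η : ℂˣ => f η) zeroFilter l ↔ Tendsto f (𝓝[≠] 0) l :=
  tendsto_comap'_iff <| mem_of_superset self_mem_nhdsWithin fun z hz => ⟨Units.mk0 z hz, rfl⟩

theorem tendsto_rep_div_of_tendsto_wAct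
    (h : Tendsto (fun η : ℂˣ => wAct w η x) zeroFilter (𝓝 a)) {k : Fin (N + 1)}
    (hk : a.rep k ≠ 0) (i : Fin (N + 1)) :
    Tendsto (fun η : ℂ => η ^ (w i - w k) * (x.rep i / x.rep k)) (𝓝[≠] 0)
      (𝓝 (a.rep i / a.rep k)) := by
  have hopen : {z : ℙ ℂ (Fin (N + 1) → ℂ) | z.rep k ≠ 0} ∈ 𝓝 a :=
    (isOpen_setOf_rep_apply_ne_zero k).mem_nhds hk
  have hratio := ((continuousOn_rep_div i k).continuousAt hopen).tendsto.comp h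
  simp only [Function.comp_def, rep_wAct_div] at hratio
  exact tendsto_zeroFilter_iff.1 hratio

theorem rep_div_eq_of_tendsto_wAct
    (h : Tendsto (fun η : ℂˣ => wAct w η x) zeroFilter (𝓝 a)) {i k : Fin (N + 1)}
    (hk : a.rep k ≠ 0) (hik : w i = w k) : x.rep i / x.rep k = a.rep i / a.rep k := by
  have hlim := tendsto_rep_div_of_tendsto_wAct h hk i
  simp only [hik, sub_self, zpow_zero, one_mul] at hlim
  exact tendsto_nhds_unique tendsto_const_nhds hlim

theorem rep_apply_ne_zero_of_tendsto_wAct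
    (h : Tendsto (fun η : ℂˣ => wAct w η x) zeroFilter (𝓝 a)) {k : Fin (N + 1)}
    (hk : a.rep k ≠ 0) : x.rep k ≠ 0 := by
  have hratio := rep_div_eq_of_tendsto_wAct h hk rfl
  rw [div_self hk] at hratio
  exact (div_ne_zero_iff.1 (hratio ▸ one_ne_zero)).2

theorem rep_mem_weightSpace_of_tendsto_wAct
    (h : Tendsto (fun η : ℂˣ => wAct w η x) zeroFilter (𝓝 a)) :
    a.rep ∈ weightSpace w (leastWeight w a.rep) := by
  obtain ⟨k, hk, hwk⟩ := exists_apply_ne_zero_and_eq_leastWeight (w := w) a.rep_nonzero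
  refine mem_weightSpace.2 fun i hi => ?_
  rcases hi.lt_or_gt with hlt | hgt
  · exact apply_eq_zero_of_lt_leastWeight hlt
  · have hlim := limit_eq_zero_of_tendsto_zpow_mul (sub_pos.2 (hwk.trans_lt hgt))
      (tendsto_rep_div_of_tendsto_wAct h hk i)
    exact (div_eq_zero_iff.1 hlim).resolve_right hk

theorem exists_rep_sub_smul_mem_weightsAbove_of_tendsto_wAct
    (h : Tendsto (fun η : ℂˣ => wAct w η x) zeroFilter (𝓝 a)) :
    ∃ t : ℂ, t ≠ 0 ∧ x.rep - t • a.rep ∈ weightsAbove w (leastWeight w a.rep) := by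
  obtain ⟨k, hk, hwk⟩ := exists_apply_ne_zero_and_eq_leastWeight (w := w) a.rep_nonzero
  have hxk : x.rep k ≠ 0 := rep_apply_ne_zero_of_tendsto_wAct h hk
  refine ⟨x.rep k / a.rep k, div_ne_zero hxk hk, mem_weightsAbove.2 fun i hi => ?_⟩
  rw [Pi.sub_apply, Pi.smul_apply, smul_eq_mul, sub_eq_zero]
  rcases hi.lt_or_eq with hlt | heq
  · have hcoeff := coeff_eq_zero_of_tendsto_zpow_mul (sub_neg.2 (hlt.trans_eq hwk.symm))
      (tendsto_rep_div_of_tendsto_wAct h hk i)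
    rw [(div_eq_zero_iff.1 hcoeff).resolve_right hxk, apply_eq_zero_of_lt_leastWeight hlt,
      mul_zero]
  · have hratio := rep_div_eq_of_tendsto_wAct h hk (heq.trans hwk.symm)
    rw [div_mul_eq_mul_div, mul_div_assoc, ← hratio, mul_div_cancel₀ _ hxk]

theorem closure_attractIn_subset :
    closure (attractIn w X a) ⊆ {y | y.rep ∈ attractingSubspace w a.rep} :=
  closure_minimal
    (fun _ hx =>
      let ⟨t, _, ht⟩ := exists_rep_sub_smul_mem_weightsAbove_of_tendsto_wAct hx.2
      mem_attractingSubspace.2 ⟨t, ht⟩)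
    (isClosed_setOf_rep_mem _)

theorem eq_or_leastWeight_lt_of_closure_attractIn_inter_nonempty
    (h : (closure (attractIn w X a) ∩ attractIn w X b).Nonempty) :
    a = b ∨ leastWeight w a.rep < leastWeight w b.rep := by
  obtain ⟨y, hya, hyb⟩ := h
  obtain ⟨x, hxa⟩ := closure_nonempty_iff.1 ⟨y, hya⟩
  obtain ⟨s, hs, hys⟩ := exists_rep_sub_smul_mem_weightsAbove_of_tendsto_wAct hyb.2
  exact eq_or_leastWeight_lt_of_mem_attractingSubspace
    (rep_mem_weightSpace_of_tendsto_wAct hxa.2) (rep_mem_weightSpace_of_tendsto_wAct hyb.2)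
    (closure_attractIn_subset hya) hs hys

end Attraction

theorem statement4_general {N : ℕ} (w : Fin (N + 1) → ℤ) (X : Set (ℙ ℂ (Fin (N + 1) → ℂ)))
    {x x' : ℙ ℂ (Fin (N + 1) → ℂ)}
    (hle : Relation.ReflTransGen
      (fun a b => (closure (attractIn w X a) ∩ attractIn w X b).Nonempty) x x')
    (hge : Relation.ReflTransGen
      (fun a b => (closure (attractIn w X a) ∩ attractIn w X b).Nonempty) x' x) :
    x = x' :=
  reflTransGen_antisymm_of_eq_or_lt
    (fun _ _ => eq_or_leastWeight_lt_of_closure_attractIn_inter_nonempty) hle hge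

/-- If `X ⊆ ℙ^N(ℂ)` is locally closed, stable under the weighted `ℂ*`-action, and
has finitely many fixed points, then the reflexive-transitive closure of the
relation `x ≺₀ x' ⟺ cl(X_x) ∩ X_{x'} ≠ ∅` on the fixed points of `X` is
antisymmetric, i.e. a partial order. -/
theorem statement4 (N : ℕ) (w : Fin (N + 1) → ℤ) (X : Set (ℙ ℂ (Fin (N + 1) → ℂ)))
    (hlc : IsLocallyClosed X)
    (hstab : ∀ (η : ℂˣ) (x : ℙ ℂ (Fin (N + 1) → ℂ)), x ∈ X → wAct w η x ∈ X)
    (hfin : (fixedIn w X).Finite) :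
    ∀ x x' : ℙ ℂ (Fin (N + 1) → ℂ), x ∈ fixedIn w X → x' ∈ fixedIn w X →
      Relation.ReflTransGen
        (fun a b => a ∈ fixedIn w X ∧ b ∈ fixedIn w X ∧
          (closure (attractIn w X a) ∩ attractIn w X b).Nonempty) x x' →
      Relation.ReflTransGen
        (fun a b => a ∈ fixedIn w X ∧ b ∈ fixedIn w X ∧
          (closure (attractIn w X a) ∩ attractIn w X b).Nonempty) x' x →
      x = x' := by
  intro x x' _ _ hle hge
  exact statement4_general w X (Relation.ReflTransGen.mono (fun _ _ hab => hab.2.2) _ _ hle)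
    (Relation.ReflTransGen.mono (fun _ _ hab => hab.2.2) _ _ hge)
end

section
/- Let X and Y be topological spaces carrying continuous actions of the topological group ℂ* = ℂ∖{0}, with Y Hausdorff, and suppose the action on X is filtrable, i.e., every point of X converges, as η → 0, to some fixed point of X. Let π : X → Y be a continuous, surjective, ℂ*-equivariant map. Then π maps the set of fixed points of X onto the set of fixed points of Y, and for every fixed point y of Y the attracting set Y_y is the union of the images π(X_x), taken over all fixed points x of X with π(x) = y. -/
open Filter Topology

/-- A point is fixed if it is fixed by every `η ∈ ℂ*`. -/
def IsCFixed {X : Type*} [MulAction ℂˣ X] (x : X) : Prop := ∀ η : ℂˣ, η • x = x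

/-- The attracting set of a point `x₀` : the points converging to `x₀` as `η → 0`. -/
noncomputable def attractSet (X : Type*) [TopologicalSpace X] [MulAction ℂˣ X] (x₀ : X) :
    Set X :=
  {x | Filter.Tendsto (fun η : ℂˣ => η • x) zeroFilter (𝓝 x₀)}

/-!
An equivariant continuous map carries limits of orbits to limits of orbits. So if `π x = z` and
`η • x → x₀`, then `η • z → π x₀`, and since limits in `Y` are unique, `z → y` exactly when
`π x₀ = y`. A fixed point `y` attracts itself, so the resulting description of `Y_y` already
yields a fixed point of `X` over `y`.
-/

section AttractingSet

open MulAction (fixedPoints)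

variable {M X Y : Type*} [TopologicalSpace X] [TopologicalSpace Y]

/-- The set of points converging to `x₀` when acted upon along the filter `l`, generalizing
`attractSet` from `ℂˣ` and `η → 0` to any acting type and any filter on it. -/
def attractingSet [SMul M X] (l : Filter M) (x₀ : X) : Set X :=
  {x | Tendsto (fun m : M => m • x) l (𝓝 x₀)}

theorem eq_of_mem_attractingSet [SMul M X] [T2Space X] {l : Filter M} [l.NeBot] {x a b : X}
    (ha : x ∈ attractingSet l a) (hb : x ∈ attractingSet l b) : a = b :=
  tendsto_nhds_unique ha hb

theorem map_mem_attractingSet [SMul M X] [SMul M Y] {l : Filter M} (π : X →[M] Y) {x x₀ : X}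
    (hπ : ContinuousAt π x₀) (hx : x ∈ attractingSet l x₀) : π x ∈ attractingSet l (π x₀) :=
  (hπ.tendsto.comp hx).congr fun m => map_smul π m x

variable [Monoid M] [MulAction M X] [MulAction M Y]

theorem mem_attractingSet_self {x : X} (hx : x ∈ fixedPoints M X) (l : Filter M) :
    x ∈ attractingSet l x :=
  tendsto_const_nhds.congr fun m => (hx m).symm

/-- The action on `X` is filtrable along `l` if the attracting sets of the fixed points
cover `X`. -/
def IsFiltrable (X : Type*) [TopologicalSpace X] [MulAction M X] (l : Filter M) : Prop :=
  ∀ x : X, ∃ x₀ ∈ fixedPoints M X, x ∈ attractingSet l x₀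

variable {l : Filter M} [l.NeBot] [T2Space Y] {π : X →[M] Y}

theorem attractingSet_eq_iUnion_image_attractingSet (hcont : Continuous π)
    (hsurj : Function.Surjective π) (hfiltr : IsFiltrable X l) (y : Y) :
    attractingSet l y = ⋃ x ∈ fixedPoints M X ∩ π ⁻¹' {y}, π '' attractingSet l x := by
  apply Set.Subset.antisymm
  · intro z hz
    obtain ⟨x, rfl⟩ := hsurj z
    obtain ⟨x₀, hx₀, hx⟩ := hfiltr x
    have hx₀y : π x₀ = y :=
      eq_of_mem_attractingSet (map_mem_attractingSet π hcont.continuousAt hx) hz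
    exact Set.mem_biUnion ⟨hx₀, hx₀y⟩ (Set.mem_image_of_mem π hx)
  · refine Set.iUnion₂_subset fun x₀ ⟨_, hx₀y⟩ => Set.image_subset_iff.2 fun x hx => ?_
    obtain rfl : π x₀ = y := hx₀y
    exact map_mem_attractingSet π hcont.continuousAt hx

theorem image_fixedPoints_eq_fixedPoints (hcont : Continuous π) (hsurj : Function.Surjective π)
    (hfiltr : IsFiltrable X l) : π '' fixedPoints M X = fixedPoints M Y := by
  apply Set.Subset.antisymm
  · exact Set.image_subset_iff.2 fun _ hx m => π.map_mem_fixedBy (hx m)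
  · intro y hy
    have hyy : y ∈ attractingSet l y := mem_attractingSet_self hy l
    rw [attractingSet_eq_iUnion_image_attractingSet hcont hsurj hfiltr] at hyy
    obtain ⟨x, ⟨hx, hxy⟩, -⟩ := Set.mem_iUnion₂.1 hyy
    exact ⟨x, hx, hxy⟩

theorem statement5_general (hcont : Continuous π) (hsurj : Function.Surjective π)
    (hfiltr : IsFiltrable X l) :
    π '' fixedPoints M X = fixedPoints M Y ∧
    ∀ y : Y,
      attractingSet l y = ⋃ x ∈ fixedPoints M X ∩ π ⁻¹' {y}, π '' attractingSet l x :=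
  ⟨image_fixedPoints_eq_fixedPoints hcont hsurj hfiltr,
    attractingSet_eq_iUnion_image_attractingSet hcont hsurj hfiltr⟩

end AttractingSet

instance zeroFilter_neBot : zeroFilter.NeBot :=
  NeBot.comap_of_range_mem inferInstance <|
    mem_of_superset self_mem_nhdsWithin fun z hz => ⟨Units.mk0 z hz, rfl⟩

/-- If `π : X → Y` is a continuous surjective `ℂ*`-equivariant map, `Y` Hausdorff and
the action on `X` filtrable, then `π` maps the fixed points of `X` onto those of `Y`,
and the attracting set of a fixed point `y` of `Y` is the union of the images of the
attracting sets of the fixed points of `X` lying over `y`. -/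
theorem statement5 {X Y : Type*} [TopologicalSpace X] [TopologicalSpace Y] [T2Space Y]
    [MulAction ℂˣ X] [ContinuousSMul ℂˣ X] [MulAction ℂˣ Y] [ContinuousSMul ℂˣ Y]
    (π : X → Y) (hcont : Continuous π) (hsurj : Function.Surjective π)
    (hequiv : ∀ (η : ℂˣ) (x : X), π (η • x) = η • π x)
    (hfiltr : ∀ x : X, ∃ x₀ : X, IsCFixed x₀ ∧ x ∈ attractSet X x₀) :
    π '' {x : X | IsCFixed x} = {y : Y | IsCFixed y} ∧
    ∀ y : Y, IsCFixed y →
      attractSet Y y = ⋃ x ∈ {x : X | IsCFixed x ∧ π x = y}, π '' attractSet X x :=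
  have h := statement5_general (l := zeroFilter) (π := ⟨π, hequiv⟩) hcont hsurj hfiltr
  ⟨h.1, fun y _ => h.2 y⟩
end

section
/- Let X and Y be topological spaces carrying continuous actions of the topological group ℂ* = ℂ∖{0}, each with only finitely many fixed points, and let π : X → Y be a continuous, ℂ*-equivariant, closed map. On the fixed points of X (respectively of Y), let ≺ be the reflexive-transitive closure of the relation x ≺₀ x' ⟺ cl(X_x) ∩ X_{x'} ≠ ∅ (respectively y ≺₀ y' ⟺ cl(Y_y) ∩ Y_{y'} ≠ ∅), where cl denotes topological closure. Then for any fixed points x, x' of X, x ≺ x' implies π(x) ≺ π(x'). -/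
open Filter Topology

/-- The one-step relation `x ≺₀ x'` on fixed points : `cl(X_x) ∩ X_{x'} ≠ ∅`. -/
noncomputable def precRel (X : Type*) [TopologicalSpace X] [MulAction ℂˣ X]
    (a b : X) : Prop :=
  IsCFixed a ∧ IsCFixed b ∧ (closure (attractSet X a) ∩ attractSet X b).Nonempty

section EquivariantMap

variable {X Y : Type*} [MulAction ℂˣ X] [MulAction ℂˣ Y]

theorem IsCFixed.map (f : X →[ℂˣ] Y) {x : X} (hx : IsCFixed x) : IsCFixed (f x) := fun η => by
  rw [← map_smul, hx η]

variable [TopologicalSpace X] [TopologicalSpace Y]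

theorem mapsTo_attractSet {f : X →[ℂˣ] Y} {a : X} (hf : ContinuousAt f a) :
    Set.MapsTo f (attractSet X a) (attractSet Y (f a)) := by
  intro x (hx : Tendsto (fun η : ℂˣ => η • x) zeroFilter (𝓝 a))
  have hlim : Tendsto (fun η : ℂˣ => f (η • x)) zeroFilter (𝓝 (f a)) := hf.tendsto.comp hx
  simpa only [attractSet, Set.mem_ofPred_eq, map_smul] using hlim

theorem precRel.map {f : X →[ℂˣ] Y} (hf : Continuous f) {a b : X} (h : precRel X a b) :
    precRel Y (f a) (f b) := by
  obtain ⟨ha, hb, z, hz_closure, hz_attract⟩ := h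
  exact ⟨ha.map f, hb.map f, f z,
    map_mem_closure hf hz_closure (mapsTo_attractSet hf.continuousAt),
    mapsTo_attractSet hf.continuousAt hz_attract⟩

theorem statement6_general (f : X →[ℂˣ] Y) (hf : Continuous f) {x x' : X}
    (h : Relation.ReflTransGen (precRel X) x x') :
    Relation.ReflTransGen (precRel Y) (f x) (f x') :=
  h.lift f fun _ _ => precRel.map hf

end EquivariantMap

/-- If `π : X → Y` is a continuous, closed, `ℂ*`-equivariant map between spaces with
finitely many fixed points, then the preorder `≺` (the reflexive-transitive closure
of `≺₀`) is compatible with `π` : `x ≺ x'` implies `π(x) ≺ π(x')`. -/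
theorem statement6 {X Y : Type*} [TopologicalSpace X] [TopologicalSpace Y]
    [MulAction ℂˣ X] [ContinuousSMul ℂˣ X] [MulAction ℂˣ Y] [ContinuousSMul ℂˣ Y]
    (hXfin : {x : X | IsCFixed x}.Finite) (hYfin : {y : Y | IsCFixed y}.Finite)
    (π : X → Y) (hcont : Continuous π) (hclosed : IsClosedMap π)
    (hequiv : ∀ (η : ℂˣ) (x : X), π (η • x) = η • π x)
    (x x' : X) (hx : IsCFixed x) (hx' : IsCFixed x')
    (h : Relation.ReflTransGen (precRel X) x x') :
    Relation.ReflTransGen (precRel Y) (π x) (π x') :=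
  statement6_general ⟨π, hequiv⟩ hcont h
end

section
/- Let X be a Hausdorff topological space with a continuous action of ℂ* = ℂ∖{0}, and let G be a finite group acting on X by homeomorphisms, with the G-action commuting with the ℂ*-action. Let π : X → X/G be the quotient map, X/G carrying the quotient topology and the induced ℂ*-action. Then for every ℂ*-fixed point y of X/G, every point of the fibre π⁻¹(y) is a ℂ*-fixed point of X; consequently π induces a bijection between the set of G-orbits of ℂ*-fixed points of X and the set of ℂ*-fixed points of X/G. -/
/-!
If `x` lies over a fixed point of `X/G`, then for each `ζ ∈ ℂ*` there is `g ∈ G` with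
`ζ • x = g • x`. The two actions commute, so `ζ ^ n • x = g ^ n • x` for all `n`, and taking `n`
to be the exponent of `G` gives `ζ ^ n • x = x`. Every `η ∈ ℂ*` is such an `n`-th power, so `x`
is fixed.
-/

open Filter Topology

section Quot

variable {X : Type*} [TopologicalSpace X] [MulAction ℂˣ X]
variable (G : Type*) [Group G] [MulAction G X] [SMulCommClass ℂˣ G X]

/-- Since the `G`-action commutes with the `ℂ*`-action, the `ℂ*`-action descends
to the quotient `X/G`. -/
noncomputable def qsmul (η : ℂˣ) :
    Quotient (MulAction.orbitRel G X) → Quotient (MulAction.orbitRel G X) :=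
  Quotient.map (fun x => η • x) (by
    intro a b hab
    obtain ⟨g, rfl⟩ := hab
    exact ⟨g, (smul_comm η g b).symm⟩)

/-- Fixed points of `X/G` under the induced `ℂ*`-action. -/
def qIsFixed (y : Quotient (MulAction.orbitRel G X)) : Prop :=
  ∀ η : ℂˣ, qsmul G η y = y

section OrbitQuotient

open MulAction

variable {M H α : Type*}

theorem pow_smul_eq_pow_smul_of_smul_eq [Monoid M] [Monoid H] [MulAction M α] [MulAction H α]
    [SMulCommClass M H α] {m : M} {h : H} {a : α} (heq : m • a = h • a) (n : ℕ) :
    m ^ n • a = h ^ n • a := by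
  have hcomm : Function.Commute (m • · : α → α) (h • ·) := smul_comm m h
  simpa only [smul_iterate_apply] using hcomm.iterate_eq_of_map_eq n heq

theorem pow_exponent_smul_eq_of_smul_mem_orbit [Monoid M] [Monoid H] [MulAction M α]
    [MulAction H α] [SMulCommClass M H α] {m : M} {a : α} (hm : m • a ∈ orbit H a) :
    m ^ Monoid.exponent H • a = a := by
  obtain ⟨h, heq⟩ := hm
  calc m ^ Monoid.exponent H • a
      = h ^ Monoid.exponent H • a := pow_smul_eq_pow_smul_of_smul_eq heq.symm _
    _ = a := by rw [Monoid.pow_exponent_eq_one, one_smul]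

theorem units_pow_surjective_of_isAlgClosed {K : Type*} [Field K] [IsAlgClosed K] {n : ℕ}
    (hn : n ≠ 0) : Function.Surjective (fun u : Kˣ => u ^ n) := by
  intro u
  obtain ⟨z, hz⟩ := IsAlgClosed.exists_pow_nat_eq (u : K) hn.pos
  have hz_unit : IsUnit z := (isUnit_pow_iff hn).mp (hz ▸ u.isUnit)
  exact ⟨hz_unit.unit, Units.ext hz⟩

variable [Monoid M] [Group H] [MulAction M α] [MulAction H α] [SMulCommClass M H α]

/-- The action on the space of `H`-orbits induced by an action commuting with that of `H`.
For `M = ℂˣ` its scalar multiplication is definitionally `qsmul`. -/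
instance orbitQuotientMulAction : MulAction M (orbitRel.Quotient H α) where
  smul m := Quotient.map (m • ·) <| by
    rintro _ b ⟨h, rfl⟩
    exact ⟨h, (smul_comm m h b).symm⟩
  one_smul := Quotient.ind fun a => congrArg _ (one_smul M a)
  mul_smul m m' := Quotient.ind fun a => congrArg _ (mul_smul m m' a)

theorem mk_mem_fixedPoints_iff_smul_mem_orbit {a : α} :
    Quotient.mk (orbitRel H α) a ∈ fixedPoints M (orbitRel.Quotient H α) ↔
      ∀ m : M, m • a ∈ orbit H a :=
  forall_congr' fun _ => Quotient.eq

-- Pitfall: `Monoid.exponent H = 0` when `H` has no finite exponent; `hroot` then makes `M` trivial.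
theorem mk_mem_fixedPoints_iff_of_surjective_pow_exponent
    (hroot : Function.Surjective (fun m : M => m ^ Monoid.exponent H)) {a : α} :
    Quotient.mk (orbitRel H α) a ∈ fixedPoints M (orbitRel.Quotient H α) ↔
      a ∈ fixedPoints M α := by
  rw [mk_mem_fixedPoints_iff_smul_mem_orbit]
  constructor
  · intro horbit m
    obtain ⟨r, rfl⟩ := hroot m
    exact pow_exponent_smul_eq_of_smul_mem_orbit (horbit r)
  · intro ha m
    rw [ha m]
    exact mem_orbit_self a

theorem statement9_general
    (hroot : Function.Surjective (fun m : M => m ^ Monoid.exponent H)) :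
    (∀ y ∈ fixedPoints M (orbitRel.Quotient H α),
      ∀ a : α, Quotient.mk (orbitRel H α) a = y → a ∈ fixedPoints M α) ∧
    (Quotient.mk (orbitRel H α) '' fixedPoints M α = fixedPoints M (orbitRel.Quotient H α)) ∧
    (∀ a b : α, a ∈ fixedPoints M α → b ∈ fixedPoints M α →
      Quotient.mk (orbitRel H α) a = Quotient.mk (orbitRel H α) b → ∃ h : H, h • b = a) := by
  refine ⟨?_, ?_, fun _ _ _ _ => Quotient.exact⟩
  · rintro _ hy a rfl
    exact (mk_mem_fixedPoints_iff_of_surjective_pow_exponent hroot).mp hy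
  · have hpre : Quotient.mk (orbitRel H α) ⁻¹' fixedPoints M (orbitRel.Quotient H α) =
        fixedPoints M α :=
      Set.ext fun _ => mk_mem_fixedPoints_iff_of_surjective_pow_exponent hroot
    rw [← hpre, Set.image_preimage_eq _ Quotient.mk_surjective]

end OrbitQuotient

/-- Let `X` be a Hausdorff space with a continuous `ℂ*`-action and let a finite
group `G` act on `X` by homeomorphisms, commuting with the `ℂ*`-action. Then every
point of the fibre over a `ℂ*`-fixed point of `X/G` is a `ℂ*`-fixed point of `X`;
consequently the quotient map induces a bijection between the `G`-orbits of
`ℂ*`-fixed points of `X` and the `ℂ*`-fixed points of `X/G`. -/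
theorem statement9 [T2Space X] [ContinuousSMul ℂˣ X] [Finite G]
    (hGcont : ∀ g : G, Continuous (fun x : X => g • x)) :
    (∀ y : Quotient (MulAction.orbitRel G X), qIsFixed G y →
      ∀ x : X, Quotient.mk (MulAction.orbitRel G X) x = y → IsCFixed x) ∧
    (Quotient.mk (MulAction.orbitRel G X) '' {x : X | IsCFixed x} =
      {y : Quotient (MulAction.orbitRel G X) | qIsFixed G y}) ∧
    (∀ x x' : X, IsCFixed x → IsCFixed x' →
      Quotient.mk (MulAction.orbitRel G X) x = Quotient.mk (MulAction.orbitRel G X) x' →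
      ∃ g : G, g • x' = x) :=
  statement9_general (M := ℂˣ) (H := G) (α := X)
    (units_pow_surjective_of_isAlgClosed Monoid.exponent_ne_zero_of_finite)

end Quot
end
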